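/- (Lemma 1 of the paper, semantic form.) One step of Plotkin's decomposition rule produces an equivalent encoding: let t : L.Term ℕ, σ₁, σ₂ : ℕ → L.Term β, z : ℕ, f : L.Functions n, u, v : Fin n → L.Term β with σ₁ z = Term.func f u and σ₂ z = Term.func f v; let ζ : Fin n → ℕ be injective with ζ i ∉ t.varFinset for all i; let t' := t.subst (fun x => if x = z then Term.func f (fun i => Term.var (ζ i)) else Term.var x), and let σ₁', σ₂' : ℕ → L.Term β satisfy σ₁' (ζ i) = u i and σ₂' (ζ i) = v i for all i, and σ₁' x = σ₁ x and σ₂' x = σ₂ x for all x ∈ t.varFinset with x ≠ z. Then for every L-structure M and valuation v₀ : β → M, the denotation sets coincide: S(t,σ₁,σ₂) = S(t',σ₁',σ₂'). -/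

import Mathlib

open FirstOrder FirstOrder.Language

theorem realize_congr_varFinset_aux {L : FirstOrder.Language} {M : Type*} [L.Structure M]
    (t : L.Term ℕ) (w w' : ℕ → M) (h : ∀ x ∈ t.varFinset, w x = w' x) :
    t.realize w = t.realize w' := by
  induction t with
  | var x => exact h x (by simp [Term.varFinset])
  | func f ts ih =>
    simp only [Term.realize_func]
    congr 1
    funext i
    refine ih i fun x hx => h x ?_
    simp only [Term.varFinset, Finset.mem_biUnion, Finset.mem_univ, true_and]
    exact ⟨i, hx⟩

theorem encoding_eq_aux {L : FirstOrder.Language} {M : Type*} [L.Structure M]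
    (t : L.Term ℕ) (a b : ℕ → M) :
    {m : M | ∃ w : ℕ → M, ((∀ x ∈ t.varFinset, w x = a x) ∨ (∀ x ∈ t.varFinset, w x = b x)) ∧
      t.realize w = m} = {m : M | t.realize a = m ∨ t.realize b = m} := by
  ext m
  constructor
  · rintro ⟨w, h | h, rfl⟩
    · exact Or.inl (realize_congr_varFinset_aux t w a h).symm
    · exact Or.inr (realize_congr_varFinset_aux t w b h).symm
  · rintro (h | h)
    · exact ⟨a, Or.inl fun _ _ => rfl, h⟩
    · exact ⟨b, Or.inr fun _ _ => rfl, h⟩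

theorem step_realize_aux {L : FirstOrder.Language} {β : Type*}
    (t : L.Term ℕ) (σ σ' : ℕ → L.Term β) (z n : ℕ) (f : L.Functions n)
    (u : Fin n → L.Term β) (hσ : σ z = Term.func f u) (ζ : Fin n → ℕ)
    (hζ : ∀ i, σ' (ζ i) = u i) (hσ' : ∀ x ∈ t.varFinset, x ≠ z → σ' x = σ x)
    {M : Type*} [L.Structure M] (v₀ : β → M) :
    (t.subst (fun x => if x = z then Term.func f (fun i => Term.var (ζ i))
      else Term.var x)).realize (fun x => (σ' x).realize v₀)
      = t.realize (fun x => (σ x).realize v₀) := by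
  rw [Term.realize_subst]
  apply realize_congr_varFinset_aux
  intro x hx
  by_cases hxz : x = z
  · subst hxz
    simp [hσ, hζ]
  · simp [hxz, hσ' x hx hxz]

/-- Lemma 1 (semantic form): one step of Plotkin's decomposition rule produces an
equivalent matching-logic encoding. -/
theorem plotkin_step_equiv_encoding (L : FirstOrder.Language) {β : Type*}
    (t : L.Term ℕ) (σ₁ σ₂ : ℕ → L.Term β) (z : ℕ) (n : ℕ) (f : L.Functions n)
    (u v : Fin n → L.Term β)
    (hσ₁ : σ₁ z = Term.func f u) (hσ₂ : σ₂ z = Term.func f v)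
    (ζ : Fin n → ℕ) (hζinj : Function.Injective ζ)
    (hζfresh : ∀ i, ζ i ∉ t.varFinset)
    (t' : L.Term ℕ)
    (ht' : t' = t.subst
      (fun x => if x = z then Term.func f (fun i => Term.var (ζ i)) else Term.var x))
    (σ₁' σ₂' : ℕ → L.Term β)
    (hσ₁'ζ : ∀ i, σ₁' (ζ i) = u i) (hσ₂'ζ : ∀ i, σ₂' (ζ i) = v i)
    (hσ₁' : ∀ x ∈ t.varFinset, x ≠ z → σ₁' x = σ₁ x)
    (hσ₂' : ∀ x ∈ t.varFinset, x ≠ z → σ₂' x = σ₂ x)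
    (M : Type*) [L.Structure M] (v₀ : β → M) :
    {m : M | ∃ w : ℕ → M,
        ((∀ x ∈ t.varFinset, w x = (σ₁ x).realize v₀) ∨
          (∀ x ∈ t.varFinset, w x = (σ₂ x).realize v₀)) ∧
        t.realize w = m} =
    {m : M | ∃ w : ℕ → M,
        ((∀ x ∈ t'.varFinset, w x = (σ₁' x).realize v₀) ∨
          (∀ x ∈ t'.varFinset, w x = (σ₂' x).realize v₀)) ∧
        t'.realize w = m} := by
  subst ht'
  rw [encoding_eq_aux t (fun x => (σ₁ x).realize v₀) (fun x => (σ₂ x).realize v₀),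
    encoding_eq_aux _ (fun x => (σ₁' x).realize v₀) (fun x => (σ₂' x).realize v₀),
    step_realize_aux t σ₁ σ₁' z n f u hσ₁ ζ hσ₁'ζ hσ₁' v₀,
    step_realize_aux t σ₂ σ₂' z n f v hσ₂ ζ hσ₂'ζ hσ₂' v₀]
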